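/- arXiv:math/0605613 — 3 statements merged into one kernel-verified Lean document; each statement's English description precedes it below -/
import Mathlib

section
/- Let Y be a real random variable with P(Y>x)=p·L(x)x^{-α} and P(Y≤−x)=q·L(x)x^{-α} for all x>0, where α>0, p,q≥0, p+q=1, and L is slowly varying. Let G be a random vector in ℝ^d, independent of Y, with |G|>0 almost surely and E|G|^{α+ε}<∞ for some ε>0. Then for every t>0 and every Borel set S of the unit sphere S^{d-1} with E(|G|^α·1{G/|G|∈∂S}) = E(|G|^α·1{−G/|G|∈∂S}) = 0, lim_{x→∞} P( |G||Y| > tx, sign(Y)·G/|G| ∈ S ) / P( |G||Y| > x ) = t^{-α} · [ p·E(|G|^α 1_S(G/|G|)) + q·E(|G|^α 1_S(−G/|G|)) ] / E|G|^α. In particular, the vector GY is regularly varying with index α and its spectral measure is given by P(Θ∈S) = p·E(|G|^α 1_S(G/|G|))/E|G|^α + q·E(|G|^α 1_S(−G/|G|))/E|G|^α. -/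
/-!
Write `F x = P(Y > x) + P(Y ≤ -x) = L x * x ^ (-α)`. For a Borel set `T` of directions,
conditioning on `G` gives
`P(|G| Y > t x, G/|G| ∈ T) / F x = E[1_T(G/|G|) P(Y > t x / |G|) / F x]` (here the inner probability
is over `Y` with `G` fixed). The integrand tends to `p t ^ (-α) |G| ^ α` because `F` is regularly
varying, and `potter_bound` dominates it by a multiple of `1 + (|G| / t) ^ (α + ε)`, so dominated
convergence applies (`breiman_one_sided`). The same argument for `-Y`, whose strict tail is squeezed
between non-strict ones, yields the two-sided limit (`breiman_two_sided`). Taking every direction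
and `t = 1` gives the asymptotics of the denominator, and the theorem is the quotient of the two
limits. The bound of Potter type is obtained directly from monotonicity of `F` by iterating
`F y ≤ 2 ^ (α + ε) F (2 y)` for large `y`.

The spectral measure is the pull-back to the sphere of the normalised mixture of the
`|G| ^ α`-tilted laws of `G/|G|` and `-G/|G|`.
-/
open MeasureTheory ProbabilityTheory Filter
open scoped ProbabilityTheory

variable {Ω : Type*} [MeasureSpace Ω]

/-- A random vector `X` is regularly varying with index `α` and spectral measure `ν`
(a probability measure on the unit sphere): for every `t > 0` and every Borel subset `S`
of the sphere whose boundary is `ν`-null,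
`P(|X| > t x, X/|X| ∈ S)/P(|X| > x) → t^{-α} ν(S)`. -/
def IsRegVarWithSpectralMeasure {E : Type*} [NormedAddCommGroup E] [NormedSpace ℝ E]
    [MeasurableSpace E] (α : ℝ) (X : Ω → E)
    (ν : Measure (Metric.sphere (0 : E) 1)) : Prop :=
  IsProbabilityMeasure ν ∧
  (∀ x : ℝ, 0 < (ℙ : Measure Ω) {ω | ‖X ω‖ > x}) ∧
  ∀ t : ℝ, 0 < t → ∀ S : Set (Metric.sphere (0 : E) 1), MeasurableSet S →
    ν (frontier S) = 0 →
    Tendsto (fun x : ℝ =>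
        ((ℙ : Measure Ω) {ω | ‖X ω‖ > t * x ∧ ‖X ω‖⁻¹ • X ω ∈ Subtype.val '' S}).toReal /
          ((ℙ : Measure Ω) {ω | ‖X ω‖ > x}).toReal)
      atTop (nhds (t ^ (-α) * (ν S).toReal))

/-! ### Potter bound -/

/-- A Potter-type bound: an antitone function, positive on `(0, ∞)` and at most `2`, whose dyadic
ratio tends to `2 ^ (-α)` satisfies `F (x / g) ≤ C (1 + g ^ β) F x` uniformly in `g > 0` for large `x`,
whenever `β > α`. -/
lemma potter_bound {F : ℝ → ℝ} {α β : ℝ} (hβ0 : 0 < β) (hαβ : α < β) (anti : Antitone F)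
    (pos : ∀ x, 0 < x → 0 < F x) (bd : ∀ x, F x ≤ 2)
    (hlim : Tendsto (fun x : ℝ => F (2 * x) / F x) atTop (nhds ((2 : ℝ) ^ (-α)))) :
    ∃ C x0 : ℝ, 0 < x0 ∧ 0 ≤ C ∧ ∀ x, x0 ≤ x → ∀ g, 0 < g →
      F (x / g) ≤ C * (1 + g ^ β) * F x := by
  have h1 : (2 : ℝ) ^ (-β) < 2 ^ (-α) :=
    Real.rpow_lt_rpow_of_exponent_lt (by norm_num) (by linarith)
  obtain ⟨x1, hx1⟩ := eventually_atTop.1 (hlim.eventually_const_lt h1)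
  set x0 := max x1 1 with hx0
  have hx0p : 0 < x0 := lt_of_lt_of_le one_pos (le_max_right _ _)
  set K : ℝ := (2 : ℝ) ^ β with hK
  have hKpos : 0 < K := by positivity
  have step : ∀ y, x0 ≤ y → F y ≤ K * F (2 * y) := by
    intro y hy
    have hFy := pos y (by linarith)
    have h := hx1 y (le_trans (le_max_left _ _) hy)
    rw [lt_div_iff₀ hFy, Real.rpow_neg (by norm_num), inv_mul_lt_iff₀ hKpos] at h
    exact h.le
  have iter : ∀ n : ℕ, ∀ y, x0 ≤ y → F y ≤ K ^ n * F (2 ^ n * y) := by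
    intro n
    induction n with
    | zero => intro y _; simp
    | succ k ih =>
      intro y hy
      have hy0 : 0 < y := by linarith
      have h2 : x0 ≤ 2 ^ k * y :=
        hy.trans (le_mul_of_one_le_left hy0.le (one_le_pow₀ (by norm_num)))
      calc F y ≤ K ^ k * F (2 ^ k * y) := ih y hy
        _ ≤ K ^ k * (K * F (2 * (2 ^ k * y))) := by gcongr; exact step _ h2
        _ = K ^ (k + 1) * F (2 ^ (k + 1) * y) := by
          rw [show (2 : ℝ) ^ (k + 1) * y = 2 * (2 ^ k * y) by ring]; ring
  have P1 : ∀ y, x0 ≤ y → ∀ g, 1 ≤ g → F y ≤ K * g ^ β * F (g * y) := by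
    intro y hy g hg
    have hy0 : 0 < y := by linarith
    obtain ⟨n, hn1, hn2⟩ := exists_nat_pow_near hg (by norm_num : (1 : ℝ) < 2)
    have hKn : K ^ n ≤ g ^ β := by
      rw [hK, ← Real.rpow_natCast, ← Real.rpow_mul (by norm_num), mul_comm,
        Real.rpow_mul (by norm_num), Real.rpow_natCast]
      exact Real.rpow_le_rpow (by positivity) hn1 hβ0.le
    have hF : F (2 ^ (n + 1) * y) ≤ F (g * y) := anti (by gcongr)
    have hF0 : 0 < F (2 ^ (n + 1) * y) := pos _ (by positivity)
    calc F y ≤ K ^ (n + 1) * F (2 ^ (n + 1) * y) := iter _ y hy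
      _ = K * K ^ n * F (2 ^ (n + 1) * y) := by ring
      _ ≤ K * g ^ β * F (g * y) := by gcongr
  have hFx0 := pos x0 hx0p
  refine ⟨K + 1 + 2 / F x0 * K, x0, hx0p, by positivity, fun x hx g hg => ?_⟩
  have hxp : 0 < x := by linarith
  have hFx := pos x hxp
  have hgβ : 0 < g ^ β := by positivity
  have hD : 0 < 2 / F x0 * K := by positivity
  rcases le_or_gt g 1 with h | h
  · have : F (x / g) ≤ F x := anti (by rw [le_div_iff₀ hg]; nlinarith)
    refine this.trans (le_mul_of_one_le_left hFx.le ?_)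
    nlinarith [mul_pos hKpos hgβ, mul_pos hD hgβ]
  · rcases le_or_gt x0 (x / g) with h' | h'
    · have := P1 (x / g) h' g h.le
      rw [mul_div_cancel₀ _ hg.ne'] at this
      refine this.trans (mul_le_mul_of_nonneg_right ?_ hFx.le)
      nlinarith [mul_pos hKpos hgβ, mul_pos hD hgβ]
    · have h3 := P1 x0 le_rfl (x / x0) (by rwa [one_le_div hx0p])
      rw [div_mul_cancel₀ _ hx0p.ne'] at h3
      have h4 : (x / x0) ^ β ≤ g ^ β := by
        refine Real.rpow_le_rpow (by positivity) ?_ hβ0.le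
        rw [div_lt_iff₀ hg] at h'
        rw [div_le_iff₀ hx0p]
        linarith
      calc F (x / g) ≤ 2 := bd _
        _ = 2 / F x0 * F x0 := by field_simp
        _ ≤ 2 / F x0 * (K * (x / x0) ^ β * F x) := by gcongr
        _ ≤ 2 / F x0 * (K * g ^ β * F x) := by gcongr
        _ = 2 / F x0 * K * g ^ β * F x := by ring
        _ ≤ _ := by
          refine mul_le_mul_of_nonneg_right ?_ hFx.le
          nlinarith [mul_pos hKpos hgβ, mul_pos hD hgβ]

/-! ### Conditioning on the random factor -/

lemma integrable_rpow_of_le {Ω : Type*} [MeasurableSpace Ω] {μ : Measure Ω} [IsFiniteMeasure μ]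
    {R : Ω → ℝ} (hR : Measurable R) (hR0 : ∀ ω, 0 ≤ R ω) {α β : ℝ} (hα : 0 < α) (hαβ : α ≤ β)
    (h : Integrable (fun ω => R ω ^ β) μ) : Integrable (fun ω => R ω ^ α) μ := by
  refine ((integrable_const (1 : ℝ)).add h).mono' (hR.pow_const α).aestronglyMeasurable
    (ae_of_all _ fun ω => ?_)
  have h0 := hR0 ω
  have h1 : 0 ≤ R ω ^ β := by positivity
  rw [Real.norm_of_nonneg (by positivity)]
  simp only [Pi.add_apply]
  rcases le_or_gt (R ω) 1 with h | h
  · have := Real.rpow_le_one h0 h hα.le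
    linarith
  · have := Real.rpow_le_rpow_of_exponent_le h.le hαβ
    linarith

/-- Fubini for an event built from two independent variables. -/
lemma measureReal_indep_eq_integral {Ω E : Type*} [MeasurableSpace Ω] [MeasurableSpace E]
    {μ : Measure Ω} [IsProbabilityMeasure μ] {G : Ω → E} {W : Ω → ℝ} (hG : Measurable G)
    (hW : Measurable W) (hind : IndepFun G W μ) {s : Set (E × ℝ)} (hs : MeasurableSet s) :
    μ.real {ω | (G ω, W ω) ∈ s} = ∫ ω, μ.real {ω' | (G ω, W ω') ∈ s} ∂μ := by
  have h1 := (indepFun_iff_map_prod_eq_prod_map_map hG.aemeasurable hW.aemeasurable).1 hind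
  have : IsProbabilityMeasure (μ.map W) := Measure.isProbabilityMeasure_map hW.aemeasurable
  have h2 : μ {ω | (G ω, W ω) ∈ s} = ∫⁻ ω, μ {ω' | (G ω, W ω') ∈ s} ∂μ := by
    have : μ {ω | (G ω, W ω) ∈ s} = μ.map (fun ω => (G ω, W ω)) s :=
      (Measure.map_apply (hG.prodMk hW) hs).symm
    rw [this, h1, Measure.prod_apply hs, lintegral_map (measurable_measure_prodMk_left hs) hG]
    refine lintegral_congr fun ω => ?_
    rw [Measure.map_apply hW (measurable_prodMk_left hs)]
    rfl
  have hm : Measurable fun ω => μ {ω' | (G ω, W ω') ∈ s} := by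
    have h := (measurable_measure_prodMk_left (ν := μ.map W) hs).comp hG
    have e : (fun ω => μ {ω' | (G ω, W ω') ∈ s}) =
        (fun x => μ.map W (Prod.mk x ⁻¹' s)) ∘ G := by
      ext ω
      exact (Measure.map_apply hW (measurable_prodMk_left hs)).symm
    rwa [e]
  rw [measureReal_def, h2]
  exact (integral_toReal hm.aemeasurable (ae_of_all _ fun ω => measure_lt_top _ _)).symm

/-! ### One- and two-sided Breiman limits -/

/-- One-sided Breiman lemma: if the upper tail of `W` is asymptotically `r c ^ (-α) F x` along
`c x`, where `F` satisfies the Potter bound, then multiplying by the independent factor `‖G‖`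
restricted to `G ∈ T` multiplies the tail by `E(‖G‖ ^ α; G ∈ T)`. The conclusion follows by
conditioning on `G` and dominated convergence. -/
lemma breiman_one_sided {Ω E : Type*} [MeasurableSpace Ω] [NormedAddCommGroup E]
    [MeasurableSpace E] [BorelSpace E]
    {μ : Measure Ω} [IsProbabilityMeasure μ] {G : Ω → E} {W : Ω → ℝ} (hG : Measurable G)
    (hW : Measurable W) (hind : IndepFun G W μ) (hpos : ∀ᵐ ω ∂μ, 0 < ‖G ω‖)
    {F : ℝ → ℝ} {α β r C x0 : ℝ} (hx0 : 0 < x0)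
    (hF : ∀ x, 0 < x → 0 < F x)
    (hpot : ∀ x, x0 ≤ x → ∀ g, 0 < g → F (x / g) ≤ C * (1 + g ^ β) * F x)
    (hle : ∀ x, 0 < x → μ.real {ω | W ω > x} ≤ F x)
    (hlim : ∀ c, 0 < c →
      Tendsto (fun x => μ.real {ω | W ω > c * x} / F x) atTop (nhds (r * c ^ (-α))))
    (hmom : Integrable (fun ω => ‖G ω‖ ^ β) μ)
    {T : Set E} (hT : MeasurableSet T) {t : ℝ} (ht : 0 < t) :
    Tendsto (fun x => μ.real {ω | G ω ∈ T ∧ ‖G ω‖ * W ω > t * x} / F x) atTop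
      (nhds (t ^ (-α) * (r * ∫ ω in {ω | G ω ∈ T}, ‖G ω‖ ^ α ∂μ))) := by
  have hA : MeasurableSet {ω | G ω ∈ T} := hG hT
  have hHanti : Antitone fun x : ℝ => μ.real {ω | W ω > x} := fun a b hab =>
    measureReal_mono fun ω (h : W ω > b) => lt_of_le_of_lt hab h
  have hHm := hHanti.measurable
  have key : ∀ x, μ.real {ω | G ω ∈ T ∧ ‖G ω‖ * W ω > t * x} / F x
      = ∫ ω in {ω | G ω ∈ T}, μ.real {ω' | W ω' > t * x / ‖G ω‖} / F x ∂μ := by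
    intro x
    have hs : MeasurableSet {z : E × ℝ | z.1 ∈ T ∧ ‖z.1‖ * z.2 > t * x} :=
      (measurable_fst hT).inter
        (measurableSet_lt measurable_const (measurable_fst.norm.mul measurable_snd))
    have := measureReal_indep_eq_integral hG hW hind hs
    simp only [Set.mem_ofPred_eq] at this
    rw [this, integral_div, ← integral_indicator hA]
    congr 1
    refine integral_congr_ae ?_
    filter_upwards [hpos] with ω hω
    by_cases h : G ω ∈ T
    · rw [Set.indicator_of_mem (by exact h)]
      congr 1
      ext ω'
      simp only [h, true_and, Set.mem_ofPred_eq, gt_iff_lt]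
      rw [div_lt_iff₀ hω, mul_comm (W ω')]
    · rw [Set.indicator_of_notMem (by exact h)]
      simp [h]
  simp_rw [key]
  have hlimit : t ^ (-α) * (r * ∫ ω in {ω | G ω ∈ T}, ‖G ω‖ ^ α ∂μ)
      = ∫ ω in {ω | G ω ∈ T}, t ^ (-α) * (r * ‖G ω‖ ^ α) ∂μ := by
    rw [integral_const_mul, integral_const_mul]
  rw [hlimit]
  refine tendsto_integral_filter_of_dominated_convergence
    (fun ω => C * (1 + (‖G ω‖ / t) ^ β)) ?_ ?_ ?_ ?_
  · exact Eventually.of_forall fun x =>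
      ((hHm.comp (measurable_const.div hG.norm)).div_const _).aestronglyMeasurable
  · filter_upwards [eventually_ge_atTop x0] with x hx
    filter_upwards [ae_restrict_of_ae hpos] with ω hω
    have hxp : 0 < x := by linarith
    have hFx := hF x hxp
    rw [Real.norm_of_nonneg (by positivity), div_le_iff₀ hFx]
    refine (hle _ (by positivity)).trans ?_
    have := hpot x hx (‖G ω‖ / t) (by positivity)
    rwa [show x / (‖G ω‖ / t) = t * x / ‖G ω‖ by field_simp] at this
  · have : (fun ω => C * (1 + (‖G ω‖ / t) ^ β)) = fun ω => C * (1 + ‖G ω‖ ^ β / t ^ β) := by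
      ext ω
      rw [Real.div_rpow (norm_nonneg _) ht.le]
    rw [this]
    exact (((integrable_const (1 : ℝ)).add (hmom.div_const _)).const_mul C).restrict
  · filter_upwards [ae_restrict_of_ae hpos] with ω hω
    have h := hlim (t / ‖G ω‖) (by positivity)
    rw [Real.div_rpow ht.le hω.le, Real.rpow_neg hω.le, div_inv_eq_mul] at h
    convert h using 1
    · ext x
      rw [div_mul_eq_mul_div]
    · congr 1
      ring

/-- Two-sided Breiman limit with a Borel set `T` of directions in the ambient space. The
normalisation is `F x = P(Y > x) + P(Y ≤ -x)`; the events `Y > 0` and `Y < 0` are handled separately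
by `breiman_one_sided`. No condition on the boundary of `T` is required, since the direction is
a function of `G` and the sign of `Y` alone. -/
lemma breiman_two_sided {Ω E : Type*} [MeasurableSpace Ω] [NormedAddCommGroup E]
    [NormedSpace ℝ E] [MeasurableSpace E] [BorelSpace E] [SecondCountableTopology E]
    {μ : Measure Ω} [IsProbabilityMeasure μ]
    {α : ℝ} (hα : 0 < α) {Y : Ω → ℝ} {G : Ω → E}
    (hYm : Measurable Y) (hGm : Measurable G) (hindep : IndepFun G Y μ)
    (hGpos : ∀ᵐ ω ∂μ, 0 < ‖G ω‖)
    {p q : ℝ} (hpq : p + q = 1) {L : ℝ → ℝ} (hLpos : ∀ x : ℝ, 0 < x → 0 < L x)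
    (hLslow : ∀ c : ℝ, 0 < c → Tendsto (fun x : ℝ => L (c * x) / L x) atTop (nhds 1))
    (htailp : ∀ x : ℝ, 0 < x → μ.real {ω | Y ω > x} = p * L x * x ^ (-α))
    (htailq : ∀ x : ℝ, 0 < x → μ.real {ω | Y ω ≤ -x} = q * L x * x ^ (-α))
    {ε : ℝ} (hε : 0 < ε) (hmom : Integrable (fun ω => ‖G ω‖ ^ (α + ε)) μ)
    {T : Set E} (hT : MeasurableSet T) {t : ℝ} (ht : 0 < t) :
    Tendsto (fun x : ℝ => μ.real {ω | ‖G ω‖ * |Y ω| > t * x ∧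
        Real.sign (Y ω) • (‖G ω‖⁻¹ • G ω) ∈ T} /
          (μ.real {ω | Y ω > x} + μ.real {ω | Y ω ≤ -x})) atTop
      (nhds (t ^ (-α) * ((p * ∫ ω in {ω | ‖G ω‖⁻¹ • G ω ∈ T}, ‖G ω‖ ^ α ∂μ)
        + q * ∫ ω in {ω | -(‖G ω‖⁻¹ • G ω) ∈ T}, ‖G ω‖ ^ α ∂μ))) := by
  set F : ℝ → ℝ := fun x => μ.real {ω | Y ω > x} + μ.real {ω | Y ω ≤ -x} with hFdef
  have hFL : ∀ x, 0 < x → F x = L x * x ^ (-α) := by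
    intro x hx
    simp only [hFdef, htailp x hx, htailq x hx]
    linear_combination (L x * x ^ (-α)) * hpq
  have hFpos : ∀ x, 0 < x → 0 < F x := by
    intro x hx
    rw [hFL x hx]
    have := hLpos x hx
    positivity
  have hFanti : Antitone F := by
    intro a b hab
    refine add_le_add (measureReal_mono fun ω h => ?_) (measureReal_mono fun ω h => ?_)
    · exact lt_of_le_of_lt hab h
    · exact le_trans (show Y ω ≤ -b from h) (neg_le_neg hab)
  have hFbd : ∀ x, F x ≤ 2 := by
    intro x
    have h1 : μ.real {ω | Y ω > x} ≤ 1 := measureReal_le_one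
    have h2 : μ.real {ω | Y ω ≤ -x} ≤ 1 := measureReal_le_one
    simp only [hFdef]
    linarith
  have hFlim : ∀ c, 0 < c → Tendsto (fun x => F (c * x) / F x) atTop (nhds (c ^ (-α))) := by
    intro c hc
    have h := (hLslow c hc).mul_const (c ^ (-α))
    rw [one_mul] at h
    refine h.congr' ?_
    filter_upwards [eventually_gt_atTop 0] with x hx
    rw [hFL _ hx, hFL _ (by positivity), Real.mul_rpow hc.le hx.le]
    have := hLpos x hx
    have : 0 < x ^ (-α) := by positivity
    field_simp
  have hpF : ∀ x, 0 < x → μ.real {ω | Y ω > x} = p * F x := fun x hx => by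
    rw [htailp x hx, hFL x hx]; ring
  have hqF : ∀ x, 0 < x → μ.real {ω | Y ω ≤ -x} = q * F x := fun x hx => by
    rw [htailq x hx, hFL x hx]; ring
  have hplim : ∀ c, 0 < c → Tendsto (fun x => μ.real {ω | Y ω > c * x} / F x) atTop
      (nhds (p * c ^ (-α))) := by
    intro c hc
    refine ((hFlim c hc).const_mul p).congr' ?_
    filter_upwards [eventually_gt_atTop 0] with x hx
    rw [hpF _ (by positivity), mul_div_assoc]
  -- The hypothesis controls `P(Y ≤ -x)`; the strict tail is squeezed between `P(Y ≤ -δ x)`,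
  -- `δ ↓ 1`, and `P(Y ≤ -x)`.
  have hqlim : ∀ c, 0 < c → Tendsto (fun x => μ.real {ω | -Y ω > c * x} / F x) atTop
      (nhds (q * c ^ (-α))) := by
    intro c hc
    have hle : ∀ δ, 0 < δ → Tendsto (fun x => μ.real {ω | Y ω ≤ -(δ * x)} / F x) atTop
        (nhds (q * δ ^ (-α))) := by
      intro δ hδ
      refine ((hFlim δ hδ).const_mul q).congr' ?_
      filter_upwards [eventually_gt_atTop 0] with x hx
      rw [hqF _ (by positivity), mul_div_assoc]
    rw [tendsto_order]
    constructor
    · intro a ha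
      have hcont : Tendsto (fun δ : ℝ => q * δ ^ (-α)) (nhdsWithin c (Set.Ioi c))
          (nhds (q * c ^ (-α))) :=
        (((Real.continuousAt_rpow_const c (-α) (Or.inl hc.ne')).tendsto).const_mul q).mono_left
          nhdsWithin_le_nhds
      obtain ⟨δ, hδ, hcδ⟩ :=
        ((hcont.eventually_const_lt ha).and self_mem_nhdsWithin).exists
      have hcδ' : c < δ := hcδ
      filter_upwards [(hle δ (hc.trans hcδ')).eventually_const_lt hδ,
        eventually_gt_atTop 0] with x hx hx0
      refine hx.trans_le (div_le_div_of_nonneg_right (measureReal_mono fun ω h => ?_)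
        (hFpos x hx0).le)
      have h' : Y ω ≤ -(δ * x) := h
      have : c * x < δ * x := by gcongr
      show c * x < -Y ω
      linarith
    · intro a ha
      filter_upwards [(hle c hc).eventually_lt_const ha, eventually_gt_atTop 0] with x hx hx0
      refine lt_of_le_of_lt (div_le_div_of_nonneg_right (measureReal_mono fun ω h => ?_)
        (hFpos x hx0).le) hx
      have h' : c * x < -Y ω := h
      show Y ω ≤ -(c * x)
      linarith
  obtain ⟨C, x0, hx0, -, hpot⟩ := potter_bound (β := α + ε) (by linarith) (by linarith) hFanti
    hFpos hFbd (hFlim 2 two_pos)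
  have hum : Measurable fun g : E => ‖g‖⁻¹ • g := measurable_norm.inv.smul measurable_id
  have hTp : MeasurableSet {g : E | ‖g‖⁻¹ • g ∈ T} := hum hT
  have hTq : MeasurableSet {g : E | -(‖g‖⁻¹ • g) ∈ T} := hum.neg hT
  have h1 := breiman_one_sided hGm hYm hindep hGpos hx0 hFpos hpot
    (fun x _ => le_add_of_nonneg_right measureReal_nonneg) hplim hmom hTp ht
  have h2 := breiman_one_sided hGm hYm.neg (hindep.comp measurable_id measurable_neg) hGpos hx0
    hFpos hpot
    (fun x _ => (measureReal_mono fun ω (h : -Y ω > x) => by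
      show Y ω ≤ -x
      linarith).trans (le_add_of_nonneg_left measureReal_nonneg)) hqlim hmom hTq ht
  have h3 := h1.add h2
  rw [← mul_add] at h3
  refine h3.congr' ?_
  filter_upwards [eventually_gt_atTop 0] with x hx
  rw [← add_div]
  congr 1
  have htx : 0 < t * x := by positivity
  have hm : MeasurableSet {ω | -(‖G ω‖⁻¹ • G ω) ∈ T ∧ ‖G ω‖ * (-Y) ω > t * x} :=
    (hGm hTq).inter (measurableSet_lt measurable_const (hGm.norm.mul hYm.neg))
  rw [← measureReal_union _ hm]
  · congr 1
    ext ω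
    simp only [Set.mem_union, Set.mem_ofPred_eq, Pi.neg_apply]
    have hn := norm_nonneg (G ω)
    rcases lt_trichotomy (Y ω) 0 with h | h | h
    · have : ¬ (‖G ω‖ * Y ω > t * x) := by nlinarith
      rw [abs_of_neg h, Real.sign_of_neg h, neg_one_smul]
      tauto
    · have : ¬ ((0 : ℝ) > t * x) := by linarith
      simp [h, this]
    · have : ¬ (‖G ω‖ * -Y ω > t * x) := by nlinarith
      rw [abs_of_pos h, Real.sign_of_pos h, one_smul]
      tauto
  · rw [Set.disjoint_left]
    rintro ω ⟨-, ha⟩ ⟨-, hb⟩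
    simp only [Pi.neg_apply] at hb
    linarith

/-! ### The quotient limit and the spectral measure -/

/-- multivariate Breiman: tail balance of `Y`, independence of `G` and `Y`,
and `E|G|^{α+ε} < ∞` imply the limit
`P(|G||Y| > tx, sign(Y)·G/|G| ∈ S)/P(|G||Y| > x) → t^{-α}[p E(|G|^α 1_S(G/|G|)) + q E(|G|^α 1_S(−G/|G|))]/E|G|^α`,
and in particular `GY` is regularly varying with index `α` with the indicated spectral
measure. -/
theorem stmt_8 [IsProbabilityMeasure (ℙ : Measure Ω)]
    (d : ℕ) (α : ℝ) (hα : 0 < α)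
    (Y : Ω → ℝ) (G : Ω → EuclideanSpace ℝ (Fin d))
    (hYm : Measurable Y) (hGm : Measurable G)
    (hindep : IndepFun G Y)
    (hGpos : ∀ᵐ ω ∂(ℙ : Measure Ω), 0 < ‖G ω‖)
    (p q : ℝ) (hp : 0 ≤ p) (hq : 0 ≤ q) (hpq : p + q = 1)
    (L : ℝ → ℝ) (hLpos : ∀ x : ℝ, 0 < x → 0 < L x)
    (hLslow : ∀ c : ℝ, 0 < c → Tendsto (fun x : ℝ => L (c * x) / L x) atTop (nhds 1))
    (htailp : ∀ x : ℝ, 0 < x →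
      ((ℙ : Measure Ω) {ω | Y ω > x}).toReal = p * L x * x ^ (-α))
    (htailq : ∀ x : ℝ, 0 < x →
      ((ℙ : Measure Ω) {ω | Y ω ≤ -x}).toReal = q * L x * x ^ (-α))
    (ε : ℝ) (hε : 0 < ε)
    (hmom : Integrable (fun ω => ‖G ω‖ ^ (α + ε))) :
    (∀ t : ℝ, 0 < t → ∀ S : Set (Metric.sphere (0 : EuclideanSpace ℝ (Fin d)) 1),
      MeasurableSet S →
      (∫ ω in {ω | ‖G ω‖⁻¹ • G ω ∈ Subtype.val '' frontier S}, ‖G ω‖ ^ α) = 0 →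
      (∫ ω in {ω | -(‖G ω‖⁻¹ • G ω) ∈ Subtype.val '' frontier S}, ‖G ω‖ ^ α) = 0 →
      Tendsto (fun x : ℝ =>
          ((ℙ : Measure Ω) {ω | ‖G ω‖ * |Y ω| > t * x ∧
              Real.sign (Y ω) • (‖G ω‖⁻¹ • G ω) ∈ Subtype.val '' S}).toReal /
            ((ℙ : Measure Ω) {ω | ‖G ω‖ * |Y ω| > x}).toReal)
        atTop (nhds (t ^ (-α) *
          ((p * ∫ ω in {ω | ‖G ω‖⁻¹ • G ω ∈ Subtype.val '' S}, ‖G ω‖ ^ α)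
            + q * ∫ ω in {ω | -(‖G ω‖⁻¹ • G ω) ∈ Subtype.val '' S}, ‖G ω‖ ^ α) /
          ∫ ω, ‖G ω‖ ^ α))) ∧
    ∃ ν : Measure (Metric.sphere (0 : EuclideanSpace ℝ (Fin d)) 1),
      (∀ S : Set (Metric.sphere (0 : EuclideanSpace ℝ (Fin d)) 1), MeasurableSet S →
        (ν S).toReal =
          ((p * ∫ ω in {ω | ‖G ω‖⁻¹ • G ω ∈ Subtype.val '' S}, ‖G ω‖ ^ α)
            + q * ∫ ω in {ω | -(‖G ω‖⁻¹ • G ω) ∈ Subtype.val '' S}, ‖G ω‖ ^ α) /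
          ∫ ω, ‖G ω‖ ^ α) ∧
      IsRegVarWithSpectralMeasure α (fun ω => Y ω • G ω) ν := by
  set R : Ω → ℝ := fun ω => ‖G ω‖ ^ α with hR
  have hRint : Integrable R :=
    integrable_rpow_of_le hGm.norm (fun _ => norm_nonneg _) hα (by linarith) hmom
  have hR0 : ∀ ω, 0 ≤ R ω := fun ω => by positivity
  have hm : 0 < ∫ ω, R ω := by
    refine (integral_pos_iff_support_of_nonneg hR0 hRint).2 ?_
    have : Function.support R =ᵐ[ℙ] Set.univ := by
      refine eventuallyEq_univ.2 ?_
      filter_upwards [hGpos] with ω hω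
      exact (Real.rpow_pos_of_pos hω α).ne'
    rw [measure_congr this]
    simp
  have main := fun (T : Set (EuclideanSpace ℝ (Fin d))) (hT : MeasurableSet T) (t : ℝ)
    (ht : 0 < t) => breiman_two_sided hα hYm hGm hindep hGpos hpq hLpos hLslow htailp htailq hε
      hmom hT ht
  have hden := main Set.univ MeasurableSet.univ 1 one_pos
  simp only [Set.mem_univ, and_true, one_mul, Real.one_rpow, Set.ofPred_true,
    Measure.restrict_univ] at hden
  rw [← add_mul, hpq, one_mul] at hden
  have hFpos : ∀ x : ℝ, 0 < x →
      0 < (ℙ : Measure Ω).real {ω | Y ω > x} + (ℙ : Measure Ω).real {ω | Y ω ≤ -x} := by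
    intro x hx
    have h1 := htailp x hx
    have h2 := htailq x hx
    rw [← measureReal_def] at h1 h2
    have : p * L x * x ^ (-α) + q * L x * x ^ (-α) = L x * x ^ (-α) := by
      linear_combination (L x * x ^ (-α)) * hpq
    rw [h1, h2, this]
    have := hLpos x hx
    positivity
  have hS : ∀ S : Set (Metric.sphere (0 : EuclideanSpace ℝ (Fin d)) 1), MeasurableSet S →
      MeasurableSet (Subtype.val '' S) := fun S h =>
    Metric.isClosed_sphere.measurableSet.subtype_image h
  have lim : ∀ t : ℝ, 0 < t → ∀ S : Set (Metric.sphere (0 : EuclideanSpace ℝ (Fin d)) 1),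
      MeasurableSet S →
      Tendsto (fun x : ℝ =>
          ((ℙ : Measure Ω) {ω | ‖G ω‖ * |Y ω| > t * x ∧
              Real.sign (Y ω) • (‖G ω‖⁻¹ • G ω) ∈ Subtype.val '' S}).toReal /
            ((ℙ : Measure Ω) {ω | ‖G ω‖ * |Y ω| > x}).toReal)
        atTop (nhds (t ^ (-α) *
          ((p * ∫ ω in {ω | ‖G ω‖⁻¹ • G ω ∈ Subtype.val '' S}, R ω)
            + q * ∫ ω in {ω | -(‖G ω‖⁻¹ • G ω) ∈ Subtype.val '' S}, R ω) /
          ∫ ω, R ω)) := by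
    intro t ht S hSm
    refine ((main _ (hS S hSm) t ht).div hden hm.ne').congr' ?_
    filter_upwards [eventually_gt_atTop 0] with x hx
    exact div_div_div_cancel_right₀ (hFpos x hx).ne' _ _
  refine ⟨fun t ht S hSm _ _ => lim t ht S hSm, ?_⟩
  -- The spectral measure: the law of the direction, tilted by `‖G‖ ^ α`, symmetrised with
  -- weights `p`, `q`, normalised, and pulled back from the ambient space to the sphere.
  set m : ℝ := ∫ ω, R ω with hmdef
  set P' : Measure Ω := (ℙ : Measure Ω).withDensity fun ω => ENNReal.ofReal (R ω) with hP'
  have hu : Measurable fun ω => ‖G ω‖⁻¹ • G ω := hGm.norm.inv.smul hGm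
  have hu' : Measurable fun ω => -(‖G ω‖⁻¹ • G ω) := hu.neg
  set ν : Measure (Metric.sphere (0 : EuclideanSpace ℝ (Fin d)) 1) :=
    (ENNReal.ofReal (p / m) • P'.map (fun ω => ‖G ω‖⁻¹ • G ω)
      + ENNReal.ofReal (q / m) • P'.map (fun ω => -(‖G ω‖⁻¹ • G ω))).comap Subtype.val with hν
  have hP'A : ∀ A : Set Ω, MeasurableSet A → P' A = ENNReal.ofReal (∫ ω in A, R ω) := by
    intro A hA
    rw [hP', withDensity_apply _ hA,
      ofReal_integral_eq_lintegral_ofReal hRint.restrict (ae_of_all _ hR0)]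
  have hνS : ∀ S : Set (Metric.sphere (0 : EuclideanSpace ℝ (Fin d)) 1), MeasurableSet S →
        (ν S).toReal =
          ((p * ∫ ω in {ω | ‖G ω‖⁻¹ • G ω ∈ Subtype.val '' S}, R ω)
            + q * ∫ ω in {ω | -(‖G ω‖⁻¹ • G ω) ∈ Subtype.val '' S}, R ω) / m := by
    intro S hSm
    have hA : MeasurableSet {ω | ‖G ω‖⁻¹ • G ω ∈ Subtype.val '' S} := hu (hS S hSm)
    have hB : MeasurableSet {ω | -(‖G ω‖⁻¹ • G ω) ∈ Subtype.val '' S} := hu' (hS S hSm)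
    have hA' : P'.map (fun ω => ‖G ω‖⁻¹ • G ω) (Subtype.val '' S) = ENNReal.ofReal
        (∫ ω in {ω | ‖G ω‖⁻¹ • G ω ∈ Subtype.val '' S}, R ω) :=
      (Measure.map_apply (μ := P') hu (hS S hSm)).trans (hP'A _ hA)
    have hB' : P'.map (fun ω => -(‖G ω‖⁻¹ • G ω)) (Subtype.val '' S) = ENNReal.ofReal
        (∫ ω in {ω | -(‖G ω‖⁻¹ • G ω) ∈ Subtype.val '' S}, R ω) :=
      (Measure.map_apply (μ := P') hu' (hS S hSm)).trans (hP'A _ hB)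
    have hI1 : 0 ≤ ∫ ω in {ω | ‖G ω‖⁻¹ • G ω ∈ Subtype.val '' S}, R ω :=
      integral_nonneg hR0
    have hI2 : 0 ≤ ∫ ω in {ω | -(‖G ω‖⁻¹ • G ω) ∈ Subtype.val '' S}, R ω :=
      integral_nonneg hR0
    rw [hν, (MeasurableEmbedding.subtype_coe Metric.isClosed_sphere.measurableSet).comap_apply,
      Measure.add_apply, Measure.smul_apply, Measure.smul_apply,
      hA', hB', smul_eq_mul, smul_eq_mul, ← ENNReal.ofReal_mul (by positivity),
      ← ENNReal.ofReal_mul (by positivity),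
      ← ENNReal.ofReal_add (mul_nonneg (by positivity) hI1) (mul_nonneg (by positivity) hI2),
      ENNReal.toReal_ofReal (add_nonneg (mul_nonneg (by positivity) hI1)
        (mul_nonneg (by positivity) hI2))]
    ring
  refine ⟨ν, hνS, ⟨?_⟩, ?_, ?_⟩
  · have h1 := hνS Set.univ MeasurableSet.univ
    have hfull : ∀ A : Set Ω, (∀ᵐ ω ∂(ℙ : Measure Ω), ω ∈ A) → ∫ ω in A, R ω = m := by
      intro A hA
      rw [setIntegral_congr_set (s := A) (eventuallyEq_univ.2 hA), setIntegral_univ]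
    rw [hfull, hfull, ← add_mul, hpq, one_mul, div_self hm.ne'] at h1
    · exact (ENNReal.toReal_eq_one_iff _).1 h1
    all_goals
      filter_upwards [hGpos] with ω hω
      have hω' : ‖G ω‖ ≠ 0 := hω.ne'
      simp [norm_smul, hω']
  · intro x
    simp only [norm_smul, Real.norm_eq_abs]
    obtain ⟨y, hy, hxy, hy0⟩ := ((hden.eventually_const_lt hm).and
      ((eventually_ge_atTop x).and (eventually_gt_atTop 0))).exists
    rw [div_pos_iff_of_pos_right (hFpos y hy0)] at hy
    refine lt_of_lt_of_le (ENNReal.toReal_pos_iff.1 hy).1 (measure_mono fun ω h => ?_)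
    have h' : ‖G ω‖ * |Y ω| > y := h
    show |Y ω| * ‖G ω‖ > x
    linarith [mul_comm (|Y ω|) ‖G ω‖]
  · intro t ht S hSm _
    have h := lim t ht S hSm
    rw [mul_div_assoc, ← hνS S hSm] at h
    have hn : ∀ ω, ‖Y ω • G ω‖ = ‖G ω‖ * |Y ω| := fun ω => by
      rw [norm_smul, Real.norm_eq_abs, mul_comm]
    have hdir : ∀ ω, (‖G ω‖ * |Y ω|)⁻¹ • (Y ω • G ω)
        = Real.sign (Y ω) • (‖G ω‖⁻¹ • G ω) := fun ω => by
      rw [smul_smul, smul_smul]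
      congr 1
      rcases lt_trichotomy (Y ω) 0 with h | h | h
      · rw [abs_of_neg h, Real.sign_of_neg h, mul_inv, mul_assoc, inv_neg, neg_mul,
          inv_mul_cancel₀ h.ne]
        ring
      · simp [h]
      · rw [abs_of_pos h, Real.sign_of_pos h, mul_inv, mul_assoc, inv_mul_cancel₀ h.ne']
        ring
    simp only [hn, hdir]
    exact h
end

section
/- Let Y_1, Y_2 be i.i.d. real random variables with |Y_1| regularly varying with index α>0, and let (a_n) satisfy n·P(|Y_1|>a_n)→1. Let G_1, G_2 be random vectors in ℝ^d with E|G_1|^{α+ε}<∞ and E|G_2|^{α+ε}<∞ for some ε>0, such that Y_1 is independent of G_1 and Y_2 is independent of the triple (G_1, G_2, Y_1). Then for every M>0, n·P( |G_1 Y_1| > M a_n and |G_2 Y_2| > M a_n ) → 0 as n→∞. -/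
/-!
Write `F x = P(|Y₁| > x)`, `p = α + ε`, and fix a truncation level `K ≥ 1` for `‖G₂‖`.

* On `{‖G₂‖ ≤ K}` the event forces `|Y₂| > M a_n / K`, which is independent of
  `{‖Y₁ G₁‖ > M a_n}`. Its contribution is at most `n F(M a_n / K) · P(‖Y₁ G₁‖ > M a_n)`; the first
  factor converges by regular variation, and the second tends to `0` because `a_n → ∞`.
* On `{‖G₂‖ > K}` the condition on `Y₁ G₁` is dropped. A Potter-type bound
  `F y ≤ C (x / y) ^ p F x` for `0 < y ≤ x`, `x` large (`potter_bound`), and the independence of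
  `Y₂` and `G₂` give the bound `C · n F(M a_n) · E[‖G₂‖ ^ p; ‖G₂‖ > K]` (`tail_product_bound`).
  Here `n F(M a_n)` is bounded, and the truncated moment vanishes as `K → ∞`.
-/

open MeasureTheory ProbabilityTheory Filter
open scoped ProbabilityTheory

/-- A nonnegative random variable `R` is regularly varying with index `α > 0`. -/
def IsRegVarTail {Ω : Type*} [MeasureSpace Ω] (α : ℝ) (R : Ω → ℝ) : Prop :=
  (∀ x : ℝ, 0 < (ℙ : Measure Ω) {ω | R ω > x}) ∧
  (∀ t : ℝ, 0 < t →
    Tendsto (fun x : ℝ =>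
      ((ℙ : Measure Ω) {ω | R ω > t * x}).toReal / ((ℙ : Measure Ω) {ω | R ω > x}).toReal)
      atTop (nhds (t ^ (-α))))

/-- Dyadic step of the Potter bound: halving the argument costs at most a factor `2 ^ p` above
`x₀`, so going down from `x` to `y ≥ x₀` costs at most `2 ^ p (x / y) ^ p`. -/
lemma potter_dyadic {F : ℝ → ℝ} (hF : Antitone F) (hpos : ∀ x, 0 < F x) {p x₀ : ℝ} (hp : 0 < p)
    (hx₀ : 0 < x₀) (h : ∀ x, x₀ ≤ x → F (x / 2) ≤ 2 ^ p * F x) (k : ℕ) :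
    ∀ x y : ℝ, x₀ ≤ y → y ≤ x → x ≤ 2 ^ k * y → F y ≤ 2 ^ p * (x / y) ^ p * F x := by
  induction k with
  | zero =>
    intro x y h1 h2 h3
    have hxy : x = y := by linarith [show x ≤ y by simpa using h3]
    subst hxy
    rw [div_self (by linarith), Real.one_rpow, mul_one]
    have : (1 : ℝ) ≤ 2 ^ p := Real.one_le_rpow (by norm_num) hp.le
    nlinarith [hpos x]
  | succ k ih =>
    intro x y h1 h2 h3
    have hy : 0 < y := by linarith
    have hstep := h x (by linarith)
    have h2p : (0 : ℝ) < 2 ^ p := by positivity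
    rcases le_or_gt x (2 * y) with hx | hx
    · have h5 : 1 ≤ (x / y) ^ p :=
        Real.one_le_rpow (by rw [le_div_iff₀ hy]; linarith) hp.le
      calc F y ≤ F (x / 2) := hF (by linarith)
        _ ≤ 2 ^ p * F x := hstep
        _ ≤ (2 ^ p * (x / y) ^ p) * F x := by
          have := hpos x
          gcongr
          exact le_mul_of_one_le_right h2p.le h5
    · have h4 := ih (x / 2) y h1 (by linarith) (by rw [pow_succ] at h3; linarith)
      have h5 : (x / y) ^ p = 2 ^ p * (x / 2 / y) ^ p := by
        rw [← Real.mul_rpow (by norm_num) (by apply div_nonneg <;> linarith)]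
        congr 1
        field_simp
      have h6 : 0 ≤ (x / 2 / y) ^ p := Real.rpow_nonneg (by apply div_nonneg <;> linarith) _
      calc F y ≤ 2 ^ p * (x / 2 / y) ^ p * F (x / 2) := h4
        _ ≤ 2 ^ p * (x / 2 / y) ^ p * (2 ^ p * F x) := by gcongr
        _ = _ := by rw [h5]; ring

/-- Potter-type bound for a positive antitone tail `F ≤ 1` whose halving ratio is eventually at
most `2 ^ p`; note that only `x`, not `y`, has to be large. -/
lemma potter_bound_s10 {F : ℝ → ℝ} (hF : Antitone F) (hpos : ∀ x, 0 < F x) (hle : ∀ x, F x ≤ 1)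
    {p x₀ : ℝ} (hp : 0 < p) (hx₀ : 0 < x₀) (h : ∀ x, x₀ ≤ x → F (x / 2) ≤ 2 ^ p * F x) :
    ∃ C : ℝ, 0 < C ∧ ∀ x y : ℝ, x₀ ≤ x → 0 < y → y ≤ x → F y ≤ C * (x / y) ^ p * F x := by
  have key : ∀ x y : ℝ, x₀ ≤ y → y ≤ x → F y ≤ 2 ^ p * (x / y) ^ p * F x := by
    intro x y h1 h2
    have hy : 0 < y := by linarith
    obtain ⟨k, hk⟩ := pow_unbounded_of_one_lt (x / y) (one_lt_two (α := ℝ))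
    exact potter_dyadic hF hpos hp hx₀ h k x y h1 h2 ((div_le_iff₀ hy).1 hk.le)
  have h2p : (0 : ℝ) < 2 ^ p := by positivity
  refine ⟨2 ^ p / F x₀, div_pos h2p (hpos _), fun x y h1 h2 h3 => ?_⟩
  have hC : (2 : ℝ) ^ p ≤ 2 ^ p / F x₀ := by
    rw [le_div_iff₀ (hpos _)]
    exact mul_le_of_le_one_right h2p.le (hle _)
  have hx : 0 < x := by linarith
  have hFx := hpos x
  have hF0 := hpos x₀
  rcases le_or_gt x₀ y with hy | hy
  · calc F y ≤ 2 ^ p * (x / y) ^ p * F x := key x y hy h3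
      _ ≤ _ := by gcongr
  · -- Below `x₀`, use `F y ≤ 1` and compare `F x` with `F x₀`.
    have h4 := key x x₀ le_rfl h1
    calc F y ≤ F x₀ / F x₀ := by rw [div_self hF0.ne']; exact hle y
      _ ≤ (2 ^ p * (x / x₀) ^ p * F x) / F x₀ := by gcongr
      _ = 2 ^ p / F x₀ * (x / x₀) ^ p * F x := by ring
      _ ≤ _ := by gcongr

/-- If `R`, `Z` are independent and the tail of `Z` at `x / r` is at most `c r ^ p` for all
`r > K`, then integrating out `Z` bounds `P(R > K, R Z > x)` by the truncated moment of `R`. -/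
lemma tail_product_bound {Ω : Type*} [MeasurableSpace Ω] {μ : Measure Ω} [IsProbabilityMeasure μ]
    {R Z : Ω → ℝ} (hR : Measurable R) (hZ : Measurable Z) (hRZ : IndepFun R Z μ)
    {p c K x : ℝ} (hc : 0 ≤ c) (hK : 0 < K)
    (hint : Integrable (fun ω => R ω ^ p) μ)
    (hb : ∀ r, K < r → μ.real {ω | Z ω > x / r} ≤ c * r ^ p) :
    μ.real {ω | K < R ω ∧ x < R ω * Z ω} ≤ c * ∫ ω in {ω | K < R ω}, R ω ^ p ∂μ := by
  have hS : MeasurableSet {q : ℝ × ℝ | K < q.1 ∧ x < q.1 * q.2} :=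
    (measurableSet_lt measurable_const measurable_fst).inter
      (measurableSet_lt measurable_const (measurable_fst.mul measurable_snd))
  have hKm : MeasurableSet {ω | K < R ω} := measurableSet_lt measurable_const hR
  have hnn : 0 ≤ᵐ[μ.restrict {ω | K < R ω}] fun ω => c * R ω ^ p := by
    filter_upwards [ae_restrict_mem hKm] with ω hω
    exact mul_nonneg hc (Real.rpow_nonneg (hK.le.trans (le_of_lt hω)) _)
  have h1 : μ {ω | K < R ω ∧ x < R ω * Z ω}
      ≤ ENNReal.ofReal (c * ∫ ω in {ω | K < R ω}, R ω ^ p ∂μ) := by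
    have hmap := (indepFun_iff_map_prod_eq_prod_map_map hR.aemeasurable hZ.aemeasurable).1 hRZ
    have : IsProbabilityMeasure (μ.map Z) := Measure.isProbabilityMeasure_map hZ.aemeasurable
    calc μ {ω | K < R ω ∧ x < R ω * Z ω}
        = (μ.map fun ω => (R ω, Z ω)) {q : ℝ × ℝ | K < q.1 ∧ x < q.1 * q.2} := by
          rw [Measure.map_apply (hR.prodMk hZ) hS]; rfl
      _ = ∫⁻ r, (μ.map Z) (Prod.mk r ⁻¹' {q : ℝ × ℝ | K < q.1 ∧ x < q.1 * q.2}) ∂(μ.map R) := by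
          rw [hmap, Measure.prod_apply hS]
      _ = ∫⁻ ω, (μ.map Z) (Prod.mk (R ω) ⁻¹' {q : ℝ × ℝ | K < q.1 ∧ x < q.1 * q.2}) ∂μ :=
          lintegral_map (measurable_measure_prodMk_left hS) hR
      _ ≤ ∫⁻ ω, {ω | K < R ω}.indicator (fun ω => ENNReal.ofReal (c * R ω ^ p)) ω ∂μ := by
          refine lintegral_mono fun ω => ?_
          by_cases hω : K < R ω
          · have hω' : ω ∈ {ω | K < R ω} := hω
            rw [Set.indicator_of_mem hω', Measure.map_apply hZ (measurable_prodMk_left hS)]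
            refine le_trans (measure_mono (t := {ω' | Z ω' > x / R ω}) ?_) ?_
            · rintro ω' ⟨_, h⟩
              have hpos : 0 < R ω := hK.trans hω
              change x / R ω < Z ω'
              rw [div_lt_iff₀ hpos, mul_comm]
              exact h
            · rw [← ofReal_measureReal]
              exact ENNReal.ofReal_le_ofReal (hb _ hω)
          · simp [hω]
      _ = ENNReal.ofReal (∫ ω in {ω | K < R ω}, c * R ω ^ p ∂μ) := by
          rw [lintegral_indicator hKm,
            ofReal_integral_eq_lintegral_ofReal (hint.const_mul c).integrableOn hnn]
      _ = _ := by rw [integral_const_mul]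
  refine ENNReal.toReal_le_of_le_ofReal ?_ h1
  rw [← integral_const_mul]
  exact integral_nonneg_of_ae hnn

/-- for i.i.d. `Y_1, Y_2` with `|Y_1|` regularly varying of index `α` and
random vectors `G_1, G_2` with `α+ε` moments, `Y_1 ⟂ G_1` and `Y_2 ⟂ (G_1,G_2,Y_1)`,
one has `n·P(|G_1Y_1| > M a_n, |G_2Y_2| > M a_n) → 0` for every `M > 0`. -/
theorem stmt_10 {Ω : Type*} [MeasureSpace Ω] [IsProbabilityMeasure (ℙ : Measure Ω)]
    (d : ℕ) (α : ℝ) (hα : 0 < α)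
    (Y₁ Y₂ : Ω → ℝ) (G₁ G₂ : Ω → EuclideanSpace ℝ (Fin d))
    (hY₁ : Measurable Y₁) (hY₂ : Measurable Y₂)
    (hG₁ : Measurable G₁) (hG₂ : Measurable G₂)
    (hident : Measure.map Y₂ (ℙ : Measure Ω) = Measure.map Y₁ (ℙ : Measure Ω))
    (hindep₁ : IndepFun Y₁ G₁)
    (hindep₂ : IndepFun Y₂ (fun ω => (G₁ ω, G₂ ω, Y₁ ω)))
    (hreg : IsRegVarTail α (fun ω => |Y₁ ω|))
    (ε : ℝ) (hε : 0 < ε)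
    (hmom₁ : Integrable (fun ω => ‖G₁ ω‖ ^ (α + ε)))
    (hmom₂ : Integrable (fun ω => ‖G₂ ω‖ ^ (α + ε)))
    (a : ℕ → ℝ)
    (ha : Tendsto (fun n : ℕ => (n : ℝ) * ((ℙ : Measure Ω) {ω | |Y₁ ω| > a n}).toReal)
      atTop (nhds 1)) :
    ∀ M : ℝ, 0 < M →
      Tendsto (fun n : ℕ => (n : ℝ) *
          ((ℙ : Measure Ω) {ω | ‖Y₁ ω • G₁ ω‖ > M * a n ∧ ‖Y₂ ω • G₂ ω‖ > M * a n}).toReal)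
        atTop (nhds 0) := by
  intro M hM
  set p := α + ε with hp_def
  have hp : 0 < p := by positivity
  set F : ℝ → ℝ := fun x => (ℙ : Measure Ω).real {ω | |Y₁ ω| > x} with hF_def
  have hFpos : ∀ x, 0 < F x := fun x =>
    ENNReal.toReal_pos (hreg.1 x).ne' (measure_ne_top _ _)
  have hFle : ∀ x, F x ≤ 1 := fun x => measureReal_le_one
  have hFanti : Antitone F := fun x y hxy =>
    measureReal_mono fun ω (hω : y < |Y₁ ω|) => lt_of_le_of_lt hxy hω
  have hrat : ∀ t : ℝ, 0 < t → Tendsto (fun x => F (t * x) / F x) atTop (nhds (t ^ (-α))) := hreg.2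
  have ha' : Tendsto (fun n : ℕ => (n : ℝ) * F (a n)) atTop (nhds 1) := ha
  -- `F (a n) → 0` while `F` never vanishes, so `a n → ∞`.
  have hFa : Tendsto (fun n => F (a n)) atTop (nhds 0) := by
    have h1 := ha'.mul (tendsto_inv_atTop_nhds_zero_nat (𝕜 := ℝ))
    rw [mul_zero] at h1
    refine h1.congr' ?_
    filter_upwards [eventually_gt_atTop 0] with n hn
    have : (n : ℝ) ≠ 0 := by positivity
    field_simp
  have hatop : Tendsto a atTop atTop := by
    rw [tendsto_atTop]
    intro b
    filter_upwards [hFa.eventually (gt_mem_nhds (hFpos b))] with n hn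
    by_contra! hlt
    exact absurd (hFanti hlt.le) (not_le.2 hn)
  have hscale : ∀ t : ℝ, 0 < t →
      Tendsto (fun n : ℕ => (n : ℝ) * F (t * a n)) atTop (nhds (t ^ (-α))) := by
    intro t ht
    have h1 := ha'.mul ((hrat t ht).comp hatop)
    rw [one_mul] at h1
    refine h1.congr fun n => ?_
    have := (hFpos (a n)).ne'
    simp only [Function.comp]
    field_simp
  -- The halving ratio tends to `2 ^ α < 2 ^ p`.
  obtain ⟨x₀, hx₀, hhalf⟩ : ∃ x₀ : ℝ, 0 < x₀ ∧ ∀ x, x₀ ≤ x → F (x / 2) ≤ 2 ^ p * F x := by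
    have hlt : (1 / 2 : ℝ) ^ (-α) < 2 ^ p := by
      rw [one_div, Real.inv_rpow (by norm_num), Real.rpow_neg (by norm_num), inv_inv]
      exact Real.rpow_lt_rpow_of_exponent_lt (by norm_num) (by linarith)
    have h1 := (hrat (1 / 2) (by norm_num)).eventually (gt_mem_nhds hlt)
    obtain ⟨b, hb⟩ := eventually_atTop.1 h1
    refine ⟨max b 1, by positivity, fun x hx => ?_⟩
    have h2 := hb x (le_trans (le_max_left _ _) hx)
    rw [div_lt_iff₀ (hFpos x)] at h2
    rw [show x / 2 = 1 / 2 * x by ring]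
    exact h2.le
  obtain ⟨C, hC, hpot⟩ := potter_bound_s10 hFanti hFpos hFle hp hx₀ hhalf
  have hF₂ : ∀ x, (ℙ : Measure Ω).real {ω | |Y₂ ω| > x} = F x := by
    intro x
    have hm : MeasurableSet {y : ℝ | |y| > x} :=
      measurableSet_lt measurable_const measurable_id.abs
    have h1 := congrArg (fun ν : Measure ℝ => ν.real {y : ℝ | |y| > x}) hident
    simp only [map_measureReal_apply hY₂ hm, map_measureReal_apply hY₁ hm] at h1
    exact h1
  have hA : Tendsto (fun n => (ℙ : Measure Ω).real {ω | ‖Y₁ ω • G₁ ω‖ > M * a n}) atTop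
      (nhds 0) := by
    have hX : Measurable fun ω => ‖Y₁ ω • G₁ ω‖ := (hY₁.smul hG₁).norm
    have h0 : Tendsto (fun b : ℝ => (ℙ : Measure Ω) {ω | b < ‖Y₁ ω • G₁ ω‖}) atTop (nhds 0) := by
      have h1 := tendsto_measure_iInter_atTop (μ := (ℙ : Measure Ω))
        (s := fun b : ℝ => {ω | b < ‖Y₁ ω • G₁ ω‖})
        (fun b => (measurableSet_lt measurable_const hX).nullMeasurableSet)
        (fun b c hbc ω (hω : c < _) => lt_of_le_of_lt hbc hω) ⟨0, measure_ne_top _ _⟩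
      have h2 : ⋂ b : ℝ, {ω | b < ‖Y₁ ω • G₁ ω‖} = ∅ := by
        ext ω
        simp only [Set.mem_iInter, Set.mem_ofPred_eq, Set.mem_empty_iff_false, iff_false, not_forall]
        exact ⟨_, lt_irrefl _⟩
      rwa [h2, measure_empty] at h1
    have h3 := (ENNReal.tendsto_toReal ENNReal.zero_ne_top).comp
      (h0.comp (hatop.const_mul_atTop hM))
    exact h3
  have htail : Tendsto (fun k : ℕ => ∫ ω in {ω | (k : ℝ) < ‖G₂ ω‖}, ‖G₂ ω‖ ^ p) atTop
      (nhds 0) := by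
    have h1 := tendsto_setIntegral_of_antitone (μ := (ℙ : Measure Ω))
      (f := fun ω => ‖G₂ ω‖ ^ p) (s := fun k : ℕ => {ω | (k : ℝ) < ‖G₂ ω‖})
      (fun k => measurableSet_lt measurable_const hG₂.norm)
      (fun b c hbc ω (hω : (c : ℝ) < _) => lt_of_le_of_lt (Nat.cast_le.2 hbc) hω)
      ⟨0, hmom₂.integrableOn⟩
    have h2 : ⋂ k : ℕ, {ω | (k : ℝ) < ‖G₂ ω‖} = ∅ := by
      ext ω
      simp only [Set.mem_iInter, Set.mem_ofPred_eq, Set.mem_empty_iff_false, iff_false, not_forall,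
        not_lt]
      exact exists_nat_ge _
    rwa [h2, Measure.restrict_empty, integral_zero_measure] at h1
  have hind : IndepFun (fun ω => ‖G₂ ω‖) (fun ω => |Y₂ ω|) :=
    (hindep₂.comp (φ := fun y : ℝ => |y|)
      (ψ := fun q : EuclideanSpace ℝ (Fin d) × EuclideanSpace ℝ (Fin d) × ℝ => ‖q.2.1‖)
      measurable_id.abs measurable_snd.fst.norm).symm
  have hind' : IndepFun (fun ω => ‖Y₁ ω • G₁ ω‖) (fun ω => |Y₂ ω|) :=
    (hindep₂.comp (φ := fun y : ℝ => |y|)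
      (ψ := fun q : EuclideanSpace ℝ (Fin d) × EuclideanSpace ℝ (Fin d) × ℝ => ‖q.2.2 • q.1‖)
      measurable_id.abs (measurable_snd.snd.smul measurable_fst).norm).symm
  -- The bound obtained by splitting at `‖G₂‖ = k`.
  have hmain : ∀ k : ℕ, 1 ≤ k → ∀ᶠ n : ℕ in atTop,
      (n : ℝ) * ((ℙ : Measure Ω)
        {ω | ‖Y₁ ω • G₁ ω‖ > M * a n ∧ ‖Y₂ ω • G₂ ω‖ > M * a n}).toReal ≤
      (ℙ : Measure Ω).real {ω | ‖Y₁ ω • G₁ ω‖ > M * a n} * (n * F (M / k * a n)) +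
        C * (n * F (M * a n)) * ∫ ω in {ω | (k : ℝ) < ‖G₂ ω‖}, ‖G₂ ω‖ ^ p := by
    intro k hk
    have hk1 : (1 : ℝ) ≤ k := by exact_mod_cast hk
    have hk0 : (0 : ℝ) < k := by linarith
    filter_upwards [(hatop.const_mul_atTop hM).eventually_ge_atTop x₀] with n hn
    have hsub : {ω | ‖Y₁ ω • G₁ ω‖ > M * a n ∧ ‖Y₂ ω • G₂ ω‖ > M * a n} ⊆
        {ω | ‖Y₁ ω • G₁ ω‖ > M * a n ∧ |Y₂ ω| > M / k * a n} ∪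
          {ω | (k : ℝ) < ‖G₂ ω‖ ∧ M * a n < ‖G₂ ω‖ * |Y₂ ω|} := by
      rintro ω ⟨h1, h2⟩
      rw [gt_iff_lt, norm_smul, Real.norm_eq_abs] at h2
      rcases le_or_gt ‖G₂ ω‖ k with h | h
      · left
        refine ⟨h1, ?_⟩
        rw [gt_iff_lt, div_mul_eq_mul_div, div_lt_iff₀ hk0]
        exact lt_of_lt_of_le h2 (by gcongr)
      · right
        exact ⟨h, by rw [mul_comm ‖G₂ ω‖]; exact h2⟩
    have hfirst : (ℙ : Measure Ω).real {ω | ‖Y₁ ω • G₁ ω‖ > M * a n ∧ |Y₂ ω| > M / k * a n} =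
        (ℙ : Measure Ω).real {ω | ‖Y₁ ω • G₁ ω‖ > M * a n} * F (M / k * a n) := by
      rw [← hF₂, measureReal_def, measureReal_def, measureReal_def, ← ENNReal.toReal_mul]
      congr 1
      exact hind'.measure_inter_preimage_eq_mul (Set.Ioi (M * a n)) (Set.Ioi (M / k * a n))
        measurableSet_Ioi measurableSet_Ioi
    have hsecond : (ℙ : Measure Ω).real {ω | (k : ℝ) < ‖G₂ ω‖ ∧ M * a n < ‖G₂ ω‖ * |Y₂ ω|} ≤
        (C * F (M * a n)) * ∫ ω in {ω | (k : ℝ) < ‖G₂ ω‖}, ‖G₂ ω‖ ^ p := by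
      refine tail_product_bound hG₂.norm hY₂.abs hind (mul_nonneg hC.le (hFpos _).le) hk0 hmom₂ ?_
      intro r hr
      have hr0 : 0 < r := hk0.trans hr
      have hx : 0 < M * a n := hx₀.trans_le hn
      have h1 := hpot (M * a n) (M * a n / r) hn (by positivity)
        (div_le_self hx.le (by linarith))
      rw [div_div_cancel₀ hx.ne'] at h1
      rw [hF₂]
      linarith
    have hle := (measureReal_mono (μ := (ℙ : Measure Ω)) hsub).trans (measureReal_union_le _ _)
    rw [hfirst] at hle
    calc (n : ℝ) * (ℙ : Measure Ω).real
          {ω | ‖Y₁ ω • G₁ ω‖ > M * a n ∧ ‖Y₂ ω • G₂ ω‖ > M * a n}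
        ≤ n * ((ℙ : Measure Ω).real {ω | ‖Y₁ ω • G₁ ω‖ > M * a n} * F (M / k * a n) +
          (C * F (M * a n)) * ∫ ω in {ω | (k : ℝ) < ‖G₂ ω‖}, ‖G₂ ω‖ ^ p) := by
          gcongr
          exact hle.trans (by gcongr)
      _ = _ := by ring
  refine tendsto_order.2 ⟨fun b hb => Eventually.of_forall fun n =>
    lt_of_lt_of_le hb (by positivity), fun δ hδ => ?_⟩
  have hlimK : Tendsto (fun k : ℕ => C * M ^ (-α) *
      ∫ ω in {ω | (k : ℝ) < ‖G₂ ω‖}, ‖G₂ ω‖ ^ p) atTop (nhds 0) := by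
    simpa using htail.const_mul (C * M ^ (-α))
  obtain ⟨k, hkδ, hk⟩ := ((hlimK.eventually (gt_mem_nhds hδ)).and (eventually_ge_atTop 1)).exists
  have hk0 : (0 : ℝ) < k := by exact_mod_cast hk
  have hlim := (hA.mul (hscale (M / k) (by positivity))).add
    (((hscale M hM).const_mul C).mul_const (∫ ω in {ω | (k : ℝ) < ‖G₂ ω‖}, ‖G₂ ω‖ ^ p))
  rw [zero_mul, zero_add] at hlim
  filter_upwards [hmain k hk, hlim.eventually (gt_mem_nhds hkδ)] with n h1 h2
  exact h1.trans_lt h2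
end

section
/- Let X be a real random variable, regularly varying with index α∈(1,2) and with EX=0, and let (a_n) satisfy n·P(|X|>a_n)→1. Then the sequence n·a_n^{-1}·E[ X·1{|X|≤a_n} ] converges to a finite limit as n→∞. -/
/-!
Since `EX = 0`, `E[X·1{|X| ≤ x}] = -E[X·1{|X| > x}]`, and for `x > 0`

`x⁻¹·X·1{|X| > x} = (X/x - 1)⁺ + 1{X > x} - (-X/x - 1)⁺ - 1{-X > x}`.

Write `G x = P(|X| > x)`. By the layer cake formula
`E[(Y/x - 1)⁺] = ∫_0^∞ P(Y > (1 + t)x) dt` for `Y = ±X`. Divided by `G x`, the integrand converges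
to `q·(1 + t)^{-α}`, where `q` is the tail balance limit (`p` for `X`, `1 - p` for `-X`), and a
Potter-type bound (`potter_bound`) dominates it by a multiple of `(1 + t)^{-β}` with `1 < β < α`;
dominated convergence gives the limit (`tendsto_integral_tail_ratio`). Hence
`x⁻¹·E[X·1{|X| ≤ x}] / G x` converges as `x → ∞`. Finally `n·G(a_n) → 1` forces `a_n → ∞`, since `G`
is positive and nonincreasing, and multiplying by `n·G(a_n)` yields the claim.
-/

open MeasureTheory ProbabilityTheory Filter
open scoped ProbabilityTheory

/-- A real random variable is regularly varying with index `α`: the tails of `|X|` are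
positive everywhere, `P(|X| > t x)/P(|X| > x) → t^{-α}`, and the ratio
`P(X > x)/P(|X| > x)` converges to some `p ∈ [0,1]`. -/
def IsRegularlyVarying {Ω : Type*} [MeasureSpace Ω] (α : ℝ) (X : Ω → ℝ) : Prop :=
  (∀ x : ℝ, 0 < (ℙ : Measure Ω) {ω | |X ω| > x}) ∧
  (∀ t : ℝ, 0 < t →
    Tendsto (fun x : ℝ =>
      ((ℙ : Measure Ω) {ω | |X ω| > t * x}).toReal /
        ((ℙ : Measure Ω) {ω | |X ω| > x}).toReal)
      atTop (nhds (t ^ (-α)))) ∧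
  (∃ p ∈ Set.Icc (0 : ℝ) 1,
    Tendsto (fun x : ℝ =>
      ((ℙ : Measure Ω) {ω | X ω > x}).toReal /
        ((ℙ : Measure Ω) {ω | |X ω| > x}).toReal)
      atTop (nhds p))

/-- A one-sided Potter bound, obtained by iterating `G (2 x) ≤ 2 ^ (-β) * G x` along dyadic scales
and filling the gaps by monotonicity; the constant `2 ^ β` pays for rounding `s` down to a power
of two. -/
lemma potter_bound_s13 {G : ℝ → ℝ} {α β : ℝ} (hβ : 0 < β) (hβα : β < α)
    (hG : Antitone G) (hpos : ∀ x, 0 < G x)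
    (h2 : Tendsto (fun x => G (2 * x) / G x) atTop (nhds ((2 : ℝ) ^ (-α)))) :
    ∀ᶠ x in atTop, ∀ s : ℝ, 1 ≤ s → G (s * x) ≤ 2 ^ β * s ^ (-β) * G x := by
  have hlt : (2 : ℝ) ^ (-α) < 2 ^ (-β) :=
    Real.rpow_lt_rpow_of_exponent_lt (by norm_num) (by linarith)
  obtain ⟨x₀, hx₀⟩ := eventually_atTop.1 (h2.eventually_lt_const hlt)
  filter_upwards [eventually_ge_atTop (max x₀ 1)] with x hx s hs
  have hxx : x₀ ≤ x := (le_max_left _ _).trans hx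
  have hx1 : 1 ≤ x := (le_max_right _ _).trans hx
  have step : ∀ k : ℕ, G (2 ^ k * x) ≤ ((2 : ℝ) ^ (-β)) ^ k * G x := by
    intro k
    induction k with
    | zero => simp
    | succ k ih =>
      have h1 : x ≤ 2 ^ k * x := le_mul_of_one_le_left (by linarith) (one_le_pow₀ (by norm_num))
      have h3 := (div_lt_iff₀ (hpos _)).1 (hx₀ (2 ^ k * x) (hxx.trans h1))
      calc G (2 ^ (k + 1) * x) = G (2 * (2 ^ k * x)) := by ring_nf
        _ ≤ (2 : ℝ) ^ (-β) * G (2 ^ k * x) := h3.le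
        _ ≤ (2 : ℝ) ^ (-β) * (((2 : ℝ) ^ (-β)) ^ k * G x) := by gcongr
        _ = _ := by ring
  obtain ⟨k, hk1, hk2⟩ := exists_nat_pow_near hs (by norm_num : (1 : ℝ) < 2)
  have hs0 : 0 < s := by linarith
  have e1 : ((2 : ℝ) ^ (-β)) ^ k ≤ 2 ^ β * s ^ (-β) := by
    have e2 : ((2 : ℝ) ^ (k + 1)) ^ (-β) ≤ s ^ (-β) :=
      Real.rpow_le_rpow_of_nonpos hs0 hk2.le (by linarith)
    have e3 : ((2 : ℝ) ^ (-β)) ^ k = 2 ^ β * ((2 : ℝ) ^ (k + 1)) ^ (-β) := by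
      rw [← Real.rpow_natCast, ← Real.rpow_mul (by norm_num), ← Real.rpow_natCast,
        ← Real.rpow_mul (by norm_num), ← Real.rpow_add (by norm_num)]
      congr 1
      push_cast
      ring
    rw [e3]
    gcongr
  calc G (s * x) ≤ G (2 ^ k * x) := hG (by gcongr)
    _ ≤ ((2 : ℝ) ^ (-β)) ^ k * G x := step k
    _ ≤ _ := by
      have := (hpos x).le
      gcongr

/-- The upper-tail half of Karamata's theorem: a tail `F ≤ G` that is asymptotically `q * G`, with
`G` regularly varying of index `-α < -1`, can be integrated inside the limit. -/
lemma tendsto_integral_tail_ratio {F G : ℝ → ℝ} {α q : ℝ} (hα : 1 < α)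
    (hG : Antitone G) (hpos : ∀ x, 0 < G x) (hF : Antitone F) (hF0 : ∀ x, 0 ≤ F x)
    (hFG : ∀ x, F x ≤ G x)
    (hreg : ∀ t : ℝ, 0 < t → Tendsto (fun x => G (t * x) / G x) atTop (nhds (t ^ (-α))))
    (hq : Tendsto (fun x => F x / G x) atTop (nhds q)) :
    Tendsto (fun x => (∫ t in Set.Ioi (0 : ℝ), F ((t + 1) * x)) / G x) atTop
      (nhds (∫ t in Set.Ioi (0 : ℝ), q * (t + 1) ^ (-α))) := by
  obtain ⟨β, hβ1, hβα⟩ := exists_between hα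
  simp_rw [← integral_div]
  refine tendsto_integral_filter_of_dominated_convergence
    (fun t => 2 ^ β * (t + 1) ^ (-β)) ?_ ?_ ?_ ?_
  · filter_upwards [eventually_ge_atTop 0] with x hx
    have : Antitone (fun t : ℝ => F ((t + 1) * x)) := fun s t hst => hF (by gcongr)
    exact (this.measurable.div_const _).aestronglyMeasurable
  · filter_upwards [potter_bound_s13 (by linarith) hβα hG hpos (hreg 2 (by norm_num))] with x hx
    filter_upwards [ae_restrict_mem measurableSet_Ioi] with t ht
    have ht0 : (0 : ℝ) < t := ht
    rw [Real.norm_of_nonneg (div_nonneg (hF0 _) (hpos _).le), div_le_iff₀ (hpos _)]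
    exact (hFG _).trans (hx _ (by linarith))
  · exact (integrableOn_add_rpow_Ioi_of_lt (by linarith) (by norm_num)).const_mul _
  · filter_upwards [ae_restrict_mem measurableSet_Ioi] with t ht
    have ht0 : (0 : ℝ) < t := ht
    have h1 : Tendsto (fun x : ℝ => (t + 1) * x) atTop atTop :=
      tendsto_id.const_mul_atTop (by linarith)
    refine ((hq.comp h1).mul (hreg (t + 1) (by linarith))).congr fun x => ?_
    have := (hpos ((t + 1) * x)).ne'
    simp only [Function.comp]
    field_simp

/-- The layer cake formula for the rescaled excess of `Y` over the level `x`. -/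
lemma integral_excess {Ω : Type*} [MeasureSpace Ω] [IsProbabilityMeasure (ℙ : Measure Ω)]
    {Y : Ω → ℝ} (hY : Integrable Y) {x : ℝ} (hx : 0 < x) :
    ∫ ω, max (Y ω / x - 1) 0 =
      ∫ t in Set.Ioi (0 : ℝ), ((ℙ : Measure Ω) {ω | Y ω > (t + 1) * x}).toReal := by
  have hi : Integrable (fun ω => max (Y ω / x - 1) 0) :=
    ((hY.div_const x).sub (integrable_const 1)).pos_part
  rw [hi.integral_eq_integral_meas_lt (ae_of_all _ fun ω => le_max_right _ _)]
  refine setIntegral_congr_fun measurableSet_Ioi fun t ht => ?_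
  have ht0 : (0 : ℝ) < t := ht
  simp only [Measure.real]
  congr 2
  ext ω
  simp only [Set.mem_ofPred_eq, lt_max_iff, ht0.not_gt, or_false, gt_iff_lt,
    lt_sub_iff_add_lt, lt_div_iff₀ hx]

/-- For centred `X`, the truncated mean expressed through the excesses and tails of `X` and
`-X`. -/
lemma truncated_mean_eq {Ω : Type*} [MeasureSpace Ω] [IsProbabilityMeasure (ℙ : Measure Ω)]
    {X : Ω → ℝ} (hXm : Measurable X) (hint : Integrable X) (hmean : ∫ ω, X ω = 0)
    {x : ℝ} (hx : 0 < x) :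
    x⁻¹ * ∫ ω in {ω | |X ω| ≤ x}, X ω =
      (∫ ω, max (-X ω / x - 1) 0) + ((ℙ : Measure Ω) {ω | -X ω > x}).toReal
        - (∫ ω, max (X ω / x - 1) 0) - ((ℙ : Measure Ω) {ω | X ω > x}).toReal := by
  have hm1 : MeasurableSet {ω | X ω > x} := measurableSet_lt measurable_const hXm
  have hm2 : MeasurableSet {ω | -X ω > x} := measurableSet_lt measurable_const hXm.neg
  have hm3 : MeasurableSet {ω | |X ω| ≤ x} := measurableSet_le hXm.abs measurable_const
  have i1 : Integrable (fun ω => max (X ω / x - 1) 0) :=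
    ((hint.div_const x).sub (integrable_const 1)).pos_part
  have i2 : Integrable (fun ω => max (-X ω / x - 1) 0) :=
    ((hint.neg.div_const x).sub (integrable_const 1)).pos_part
  have i3 : Integrable ({ω | X ω > x}.indicator (fun _ : Ω => (1 : ℝ))) :=
    (integrable_const 1).indicator hm1
  have i4 : Integrable ({ω | -X ω > x}.indicator (fun _ : Ω => (1 : ℝ))) :=
    (integrable_const 1).indicator hm2
  have e3 : ∫ ω, {ω | X ω > x}.indicator (fun _ : Ω => (1 : ℝ)) ω =
      ((ℙ : Measure Ω) {ω | X ω > x}).toReal := integral_indicator_one hm1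
  have e4 : ∫ ω, {ω | -X ω > x}.indicator (fun _ : Ω => (1 : ℝ)) ω =
      ((ℙ : Measure Ω) {ω | -X ω > x}).toReal := integral_indicator_one hm2
  have key : ∀ ω, x⁻¹ * {ω | |X ω| ≤ x}.indicator X ω =
      x⁻¹ * X ω + (max (-X ω / x - 1) 0 + {ω | -X ω > x}.indicator (fun _ : Ω => (1 : ℝ)) ω
        - max (X ω / x - 1) 0 - {ω | X ω > x}.indicator (fun _ : Ω => (1 : ℝ)) ω) := by
    intro ω
    simp only [Set.indicator, Set.mem_ofPred_eq, gt_iff_lt]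
    have d1 : X ω / x - 1 = (X ω - x) / x := by field_simp
    have d2 : -X ω / x - 1 = (-X ω - x) / x := by field_simp
    rcases lt_or_ge x (X ω) with h | h
    · have c1 : ¬ |X ω| ≤ x := by rw [abs_le]; intro h'; linarith [h'.2]
      have c2 : ¬ x < -X ω := by linarith
      have m1 : 0 ≤ X ω / x - 1 := d1 ▸ div_nonneg (by linarith) hx.le
      have m2 : -X ω / x - 1 ≤ 0 := d2 ▸ div_nonpos_of_nonpos_of_nonneg (by linarith) hx.le
      rw [if_neg c1, if_neg c2, if_pos h, max_eq_left m1, max_eq_right m2]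
      ring
    · have m1 : X ω / x - 1 ≤ 0 := d1 ▸ div_nonpos_of_nonpos_of_nonneg (by linarith) hx.le
      rcases lt_or_ge x (-X ω) with h' | h'
      · have c1 : ¬ |X ω| ≤ x := by rw [abs_le]; intro h''; linarith [h''.1]
        have m2 : 0 ≤ -X ω / x - 1 := d2 ▸ div_nonneg (by linarith) hx.le
        rw [if_neg c1, if_pos h', if_neg h.not_gt, max_eq_right m1, max_eq_left m2]
        ring
      · have c1 : |X ω| ≤ x := abs_le.2 ⟨by linarith, h⟩
        have m2 : -X ω / x - 1 ≤ 0 := d2 ▸ div_nonpos_of_nonpos_of_nonneg (by linarith) hx.le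
        rw [if_pos c1, if_neg h'.not_gt, if_neg h.not_gt, max_eq_right m1, max_eq_right m2]
        ring
  have i5 : Integrable fun ω =>
      max (-X ω / x - 1) 0 + {ω | -X ω > x}.indicator (fun _ : Ω => (1 : ℝ)) ω := i2.add i4
  have i6 : Integrable fun ω =>
      max (-X ω / x - 1) 0 + {ω | -X ω > x}.indicator (fun _ : Ω => (1 : ℝ)) ω
        - max (X ω / x - 1) 0 := i5.sub i1
  have i7 : Integrable fun ω =>
      max (-X ω / x - 1) 0 + {ω | -X ω > x}.indicator (fun _ : Ω => (1 : ℝ)) ω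
        - max (X ω / x - 1) 0 - {ω | X ω > x}.indicator (fun _ : Ω => (1 : ℝ)) ω := i6.sub i3
  rw [← integral_indicator hm3, ← integral_const_mul, integral_congr_ae (ae_of_all _ key),
    integral_add (hint.const_mul _) i7, integral_const_mul, hmean,
    integral_sub i6 i3, integral_sub i5 i1, integral_add i2 i4, e3, e4]
  ring

/-- if `X` is regularly varying with index `α ∈ (1,2)` and `EX = 0`, and
`n·P(|X| > a_n) → 1`, then `n·a_n⁻¹·E[X·1{|X| ≤ a_n}]` converges to a finite limit. -/
theorem stmt_13 {Ω : Type*} [MeasureSpace Ω] [IsProbabilityMeasure (ℙ : Measure Ω)]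
    (α : ℝ) (hα : α ∈ Set.Ioo (1 : ℝ) 2) (X : Ω → ℝ) (hXm : Measurable X)
    (hreg : IsRegularlyVarying α X)
    (hint : Integrable X) (hmean : ∫ ω, X ω = 0)
    (a : ℕ → ℝ)
    (ha : Tendsto (fun n : ℕ => (n : ℝ) * ((ℙ : Measure Ω) {ω | |X ω| > a n}).toReal)
      atTop (nhds 1)) :
    ∃ b : ℝ, Tendsto
      (fun n : ℕ => (n : ℝ) * (a n)⁻¹ * ∫ ω in {ω | |X ω| ≤ a n}, X ω)
      atTop (nhds b) := by
  obtain ⟨hpos', hreg', p, -, hp⟩ := hreg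
  set G : ℝ → ℝ := fun x => ((ℙ : Measure Ω) {ω | |X ω| > x}).toReal with hGdef
  set F : ℝ → ℝ := fun x => ((ℙ : Measure Ω) {ω | X ω > x}).toReal with hFdef
  set H : ℝ → ℝ := fun x => ((ℙ : Measure Ω) {ω | -X ω > x}).toReal with hHdef
  have hpos : ∀ x, 0 < G x := fun x => ENNReal.toReal_pos (hpos' x).ne' (measure_ne_top _ _)
  have anti : ∀ Y : Ω → ℝ, Antitone fun x : ℝ => ((ℙ : Measure Ω) {ω | Y ω > x}).toReal :=
    fun Y x y hxy => ENNReal.toReal_mono (measure_ne_top _ _)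
      (measure_mono fun ω (hω : Y ω > y) => lt_of_le_of_lt hxy hω)
  have hG : Antitone G := anti fun ω => |X ω|
  have hFG : ∀ x, F x ≤ G x := fun x => ENNReal.toReal_mono (measure_ne_top _ _)
    (measure_mono fun ω (hω : X ω > x) => lt_of_lt_of_le hω (le_abs_self _))
  have hHG : ∀ x, H x ≤ G x := fun x => ENNReal.toReal_mono (measure_ne_top _ _)
    (measure_mono fun ω (hω : -X ω > x) => lt_of_lt_of_le hω (neg_le_abs _))
  have hsum : ∀ x, 0 ≤ x → G x = F x + H x := by
    intro x hx
    have hu : {ω | |X ω| > x} = {ω | X ω > x} ∪ {ω | -X ω > x} := by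
      ext ω
      simp [lt_abs]
    have hd : Disjoint {ω | X ω > x} {ω | -X ω > x} :=
      Set.disjoint_left.2 fun ω (h1 : X ω > x) (h2 : -X ω > x) => by linarith
    simp only [hGdef, hFdef, hHdef]
    rw [hu, measure_union hd (measurableSet_lt measurable_const hXm.neg),
      ENNReal.toReal_add (measure_ne_top _ _) (measure_ne_top _ _)]
  have hq : Tendsto (fun x => H x / G x) atTop (nhds (1 - p)) := by
    refine (tendsto_const_nhds.sub hp).congr' ?_
    filter_upwards [eventually_ge_atTop 0] with x hx
    have h1 := (hpos x).ne'
    change 1 - F x / G x = H x / G x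
    rw [eq_div_iff h1, sub_mul, div_mul_cancel₀ _ h1, hsum x hx]
    ring
  have kF := tendsto_integral_tail_ratio hα.1 hG hpos (anti X)
    (fun _ => ENNReal.toReal_nonneg) hFG hreg' hp
  have kH := tendsto_integral_tail_ratio hα.1 hG hpos (anti fun ω => -X ω)
    (fun _ => ENNReal.toReal_nonneg) hHG hreg' hq
  have hlim := ((kH.add hq).sub kF).sub hp
  -- `G` is positive and nonincreasing, so `G (a n) → 0` is only possible if `a n → ∞`.
  have hatop : Tendsto a atTop atTop := by
    have hG0 : Tendsto (fun n : ℕ => G (a n)) atTop (nhds 0) := by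
      have := ha.mul (tendsto_inv_atTop_nhds_zero_nat (𝕜 := ℝ))
      rw [mul_zero] at this
      refine this.congr' ?_
      filter_upwards [eventually_gt_atTop 0] with n hn
      have : (n : ℝ) ≠ 0 := by positivity
      change (n : ℝ) * G (a n) * (n : ℝ)⁻¹ = G (a n)
      field_simp
    refine tendsto_atTop.2 fun M => ?_
    filter_upwards [hG0.eventually_lt_const (hpos M)] with n hn
    by_contra! hlt
    exact absurd (hG hlt.le) (not_le.2 hn)
  refine ⟨_, (ha.mul (hlim.comp hatop)).congr' ?_⟩
  filter_upwards [hatop.eventually_gt_atTop 0] with n hn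
  have h1 := (hpos (a n)).ne'
  rw [mul_assoc (n : ℝ) (a n)⁻¹, truncated_mean_eq hXm hint hmean hn, integral_excess hint hn,
    integral_excess (Y := fun ω => -X ω) hint.neg hn, mul_assoc]
  congr 1
  simp only [Function.comp]
  change G (a n) * (_ / G (a n) + H (a n) / G (a n) - _ / G (a n) - F (a n) / G (a n)) = _
  rw [← add_div, ← sub_div, ← sub_div]
  exact mul_div_cancel₀ _ h1
end
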